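/- Duality theorem for the scalability limit of operator scaling (Theorem 4.11): the infimum over all g ∈ GL_n(ℂ) and h ∈ GL_m(ℂ) with Σ_{ℓ=1}^N ‖g A_ℓ h†‖² = 1 of the quantity ( ‖Σ_{ℓ=1}^N g A_ℓ h† h A_ℓ† g† − (1/n)·Iₙ‖² + ‖Σ_{ℓ=1}^N h A_ℓ† g† g A_ℓ h† − (1/m)·Iₘ‖² )^{1/2} is equal to the supremum over all special unitary matrices σ ∈ SU(n), τ ∈ SU(m) and all vectors p ∈ ℝⁿ, q ∈ ℝᵐ with Σᵢ pᵢ = Σⱼ qⱼ = 0 and ‖p‖² + ‖q‖² ≤ 1 of the quantity −max{ pᵢ + qⱼ : indices (i,j) such that (σ A_ℓ τ†)_{ij} ≠ 0 for some ℓ }. -/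

import Mathlib

open Filter Matrix

/-- The Frobenius norm of a complex matrix. -/
noncomputable def frobNorm {a b : ℕ} (M : Matrix (Fin a) (Fin b) ℂ) : ℝ :=
  Real.sqrt (∑ i, ∑ j, ‖M i j‖ ^ 2)

/-- Squared Frobenius norm. -/
noncomputable def fsq {a b : ℕ} (M : Matrix (Fin a) (Fin b) ℂ) : ℝ :=
  ∑ i, ∑ j, ‖M i j‖ ^ 2

lemma fsq_nonneg {a b : ℕ} (M : Matrix (Fin a) (Fin b) ℂ) : 0 ≤ fsq M := by
  unfold fsq; positivity

lemma frobNorm_sq {a b : ℕ} (M : Matrix (Fin a) (Fin b) ℂ) : frobNorm M ^ 2 = fsq M := by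
  exact Real.sq_sqrt (fsq_nonneg M)

lemma fsq_eq_trace {a b : ℕ} (M : Matrix (Fin a) (Fin b) ℂ) :
    fsq M = (trace (M * Mᴴ)).re := by
  simp only [fsq, trace, diag_apply, mul_apply, conjTranspose_apply, Complex.re_sum]
  refine Finset.sum_congr rfl fun i _ => Finset.sum_congr rfl fun j _ => ?_
  rw [← Complex.normSq_eq_norm_sq]
  simp [Complex.normSq_apply]

lemma fsq_eq_trace' {a b : ℕ} (M : Matrix (Fin a) (Fin b) ℂ) :
    fsq M = (trace (Mᴴ * M)).re := by
  rw [fsq_eq_trace, trace_mul_comm]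

lemma fsq_mul_left {a b : ℕ} (U : Matrix (Fin a) (Fin a) ℂ) (hU : Uᴴ * U = 1)
    (M : Matrix (Fin a) (Fin b) ℂ) : fsq (U * M) = fsq M := by
  rw [fsq_eq_trace', fsq_eq_trace', conjTranspose_mul, Matrix.mul_assoc, ← Matrix.mul_assoc Uᴴ, hU,
    Matrix.one_mul]

lemma fsq_mul_right {a b : ℕ} (U : Matrix (Fin b) (Fin b) ℂ) (hU : U * Uᴴ = 1)
    (M : Matrix (Fin a) (Fin b) ℂ) : fsq (M * U) = fsq M := by
  rw [fsq_eq_trace, fsq_eq_trace, conjTranspose_mul, Matrix.mul_assoc, ← Matrix.mul_assoc U, hU,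
    Matrix.one_mul]

/-- A QR-type decomposition adapted to a weight function. -/
lemma exists_qr {a : ℕ} (M : Matrix (Fin a) (Fin a) ℂ) (p : Fin a → ℝ) :
    ∃ U : Matrix (Fin a) (Fin a) ℂ, Uᴴ * U = 1 ∧ U * Uᴴ = 1 ∧
      ∀ j i, (Uᴴ * M) j i ≠ 0 → p j ≤ p i := by
  let s := Tuple.sort p
  have hs : Monotone (p ∘ s) := Tuple.monotone_sort p
  let f : Fin a → EuclideanSpace ℂ (Fin a) := fun i => WithLp.toLp 2 (fun k => M k (s i))
  have hcard : Module.finrank ℂ (EuclideanSpace ℂ (Fin a)) = Fintype.card (Fin a) := by simp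
  let b := InnerProductSpace.gramSchmidtOrthonormalBasis hcard f
  let U : Matrix (Fin a) (Fin a) ℂ := Matrix.of fun i j => b (s.symm j) i
  have h1 : Uᴴ * U = 1 := by
    ext j k
    have := b.inner_eq_ite (s.symm j) (s.symm k)
    rw [PiLp.inner_apply] at this
    simp only [EmbeddingLike.apply_eq_iff_eq] at this
    rw [mul_apply, one_apply, ← this]
    refine Finset.sum_congr rfl fun i _ => ?_
    simp [U, mul_comm]
  refine ⟨U, h1, mul_eq_one_comm.mp h1, ?_⟩
  intro j i h
  by_contra hlt
  apply h
  push Not at hlt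
  have hij : s.symm i < s.symm j := by
    by_contra hc
    push Not at hc
    have := hs hc
    simp at this
    linarith
  have := InnerProductSpace.gramSchmidtOrthonormalBasis_inv_triangular hcard f hij
  rw [PiLp.inner_apply] at this
  rw [mul_apply, ← this]
  refine Finset.sum_congr rfl fun k _ => ?_
  simp [U, f, b, mul_comm]

lemma supp_triangular {a b : ℕ} (R : Matrix (Fin a) (Fin a) ℂ) (B : Matrix (Fin a) (Fin b) ℂ)
    (R' : Matrix (Fin b) (Fin b) ℂ) (p : Fin a → ℝ) (q : Fin b → ℝ) (c : ℝ)
    (hR : ∀ j i, R j i ≠ 0 → p j ≤ p i) (hR' : ∀ j i, R' j i ≠ 0 → q j ≤ q i)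
    (hB : ∀ i j, B i j ≠ 0 → p i + q j ≤ c) (i : Fin a) (j : Fin b)
    (h : (R * B * R'ᴴ) i j ≠ 0) : p i + q j ≤ c := by
  rw [mul_apply] at h
  obtain ⟨l, -, hl⟩ := Finset.exists_ne_zero_of_sum_ne_zero h
  have h1 := left_ne_zero_of_mul hl
  have h2 := right_ne_zero_of_mul hl
  rw [mul_apply] at h1
  obtain ⟨k, -, hk⟩ := Finset.exists_ne_zero_of_sum_ne_zero h1
  have h3 := hR _ _ (left_ne_zero_of_mul hk)
  have h4 := hB _ _ (right_ne_zero_of_mul hk)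
  have h5 := hR' j l (by intro h0; apply h2; simp [h0])
  linarith

lemma weighted_bound {n m : ℕ} (X : Matrix (Fin n) (Fin n) ℂ) (Y : Matrix (Fin m) (Fin m) ℂ)
    (p : Fin n → ℝ) (q : Fin m → ℝ) (hpq : (∑ i, (p i) ^ 2) + (∑ j, (q j) ^ 2) ≤ 1) :
    -((∑ i, p i * (X i i).re) + ∑ j, q j * (Y j j).re) ≤ Real.sqrt (fsq X + fsq Y) := by
  apply Real.le_sqrt_of_sq_le
  have key : ∀ {a : ℕ} (Z : Matrix (Fin a) (Fin a) ℂ), ∑ i, (Z i i).re ^ 2 ≤ fsq Z := by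
    intro a Z
    refine Finset.sum_le_sum fun i _ => ?_
    calc (Z i i).re ^ 2 ≤ ‖Z i i‖ ^ 2 := by
          rw [← sq_abs]; gcongr; exact Complex.abs_re_le_norm _
      _ ≤ _ := Finset.single_le_sum (f := fun j => ‖Z i j‖ ^ 2) (fun j _ => by positivity)
          (Finset.mem_univ i)
  have cs := Finset.sum_mul_sq_le_sq_mul_sq (Finset.univ : Finset (Fin n ⊕ Fin m))
    (Sum.elim p q) (Sum.elim (fun i => (X i i).re) (fun j => (Y j j).re))
  simp only [Fintype.sum_sum_type, Sum.elim_inl, Sum.elim_inr] at cs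
  have h1 := key X
  have h2 := key Y
  have h3 : 0 ≤ ∑ i, (X i i).re ^ 2 := by positivity
  have h4 : 0 ≤ ∑ i, (Y i i).re ^ 2 := by positivity
  rw [neg_sq]
  refine cs.trans ?_
  nlinarith

lemma diag_weight {a b : ℕ} (B : Matrix (Fin a) (Fin b) ℂ) (p : Fin a → ℝ) :
    ∑ i, p i * ((B * Bᴴ) i i).re = ∑ i, ∑ j, p i * ‖B i j‖ ^ 2 := by
  refine Finset.sum_congr rfl fun i _ => ?_
  rw [← Finset.mul_sum, mul_apply, Complex.re_sum]
  congr 1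
  refine Finset.sum_congr rfl fun j _ => ?_
  rw [← Complex.normSq_eq_norm_sq]
  simp [Complex.normSq_apply]

lemma weak_aux {N n m : ℕ} (B : Fin N → Matrix (Fin n) (Fin m) ℂ)
    (hB : ∑ ℓ, fsq (B ℓ) = 1) (p : Fin n → ℝ) (q : Fin m → ℝ)
    (hp : ∑ i, p i = 0) (hq : ∑ j, q j = 0)
    (hpq : (∑ i, (p i) ^ 2) + (∑ j, (q j) ^ 2) ≤ 1) (c : ℝ)
    (hc : ∀ ℓ i j, B ℓ i j ≠ 0 → p i + q j ≤ c) :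
    -c ≤ Real.sqrt (fsq ((∑ ℓ, B ℓ * (B ℓ)ᴴ) - ((n : ℂ))⁻¹ • (1 : Matrix (Fin n) (Fin n) ℂ))
      + fsq ((∑ ℓ, (B ℓ)ᴴ * (B ℓ)) - ((m : ℂ))⁻¹ • (1 : Matrix (Fin m) (Fin m) ℂ))) := by
  refine le_trans ?_ (weighted_bound _ _ p q hpq)
  rw [neg_le_neg_iff]
  have key : ∀ {a : ℕ} (Z : Matrix (Fin a) (Fin a) ℂ) (p : Fin a → ℝ) (_ : ∑ i, p i = 0) ,
      ∑ i, p i * ((Z - ((a : ℂ))⁻¹ • (1 : Matrix (Fin a) (Fin a) ℂ)) i i).re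
        = ∑ i, p i * (Z i i).re := by
    intro a Z p hp
    simp only [Matrix.sub_apply, Matrix.smul_apply, one_apply_eq, Complex.sub_re, mul_sub, Finset.sum_sub_distrib,
      ← Finset.sum_mul, hp]
    simp
  rw [key _ p hp, key _ q hq]
  have e1 : ∑ i, p i * ((∑ ℓ, B ℓ * (B ℓ)ᴴ) i i).re = ∑ ℓ, ∑ i, ∑ j, p i * ‖B ℓ i j‖ ^ 2 := by
    simp only [← diag_weight]
    rw [Finset.sum_comm]
    refine Finset.sum_congr rfl fun i _ => ?_
    rw [Matrix.sum_apply, Complex.re_sum, Finset.mul_sum]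
  have e2 : ∑ j, q j * ((∑ ℓ, (B ℓ)ᴴ * (B ℓ)) j j).re = ∑ ℓ, ∑ i, ∑ j, q j * ‖B ℓ i j‖ ^ 2 := by
    have : ∀ ℓ, ∑ i, ∑ j, q j * ‖B ℓ i j‖ ^ 2 = ∑ j, q j * (((B ℓ)ᴴ * (B ℓ)) j j).re := by
      intro ℓ
      have := diag_weight (B ℓ)ᴴ q
      rw [conjTranspose_conjTranspose] at this
      rw [this, Finset.sum_comm]
      simp
    simp only [this]
    rw [Finset.sum_comm]
    refine Finset.sum_congr rfl fun i _ => ?_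
    rw [Matrix.sum_apply, Complex.re_sum, Finset.mul_sum]
  rw [e1, e2]
  calc _ = ∑ ℓ, ∑ i, ∑ j, (p i + q j) * ‖B ℓ i j‖ ^ 2 := by
        simp only [add_mul, Finset.sum_add_distrib]
    _ ≤ ∑ ℓ, ∑ i, ∑ j, c * ‖B ℓ i j‖ ^ 2 := by
        refine Finset.sum_le_sum fun ℓ _ => Finset.sum_le_sum fun i _ =>
          Finset.sum_le_sum fun j _ => ?_
        by_cases h : B ℓ i j = 0
        · simp [h]
        · have := hc ℓ i j h
          gcongr
    _ = c := by
        simp only [← Finset.mul_sum]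
        have : ∑ ℓ, ∑ i, ∑ j, ‖B ℓ i j‖ ^ 2 = 1 := hB
        rw [this, mul_one]

/-- Weak duality. -/
lemma weak_duality {N n m : ℕ} (A : Fin N → Matrix (Fin n) (Fin m) ℂ)
    (g : Matrix (Fin n) (Fin n) ℂ) (h : Matrix (Fin m) (Fin m) ℂ)
    (hgh : ∑ ℓ, fsq (g * A ℓ * hᴴ) = 1)
    (σ : Matrix (Fin n) (Fin n) ℂ) (hσ : σᴴ * σ = 1)
    (τ : Matrix (Fin m) (Fin m) ℂ) (hτ : τᴴ * τ = 1)
    (p : Fin n → ℝ) (q : Fin m → ℝ)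
    (hp : ∑ i, p i = 0) (hq : ∑ j, q j = 0)
    (hpq : (∑ i, (p i) ^ 2) + (∑ j, (q j) ^ 2) ≤ 1) (c : ℝ)
    (hc : ∀ ℓ i j, (σ * A ℓ * τᴴ) i j ≠ 0 → p i + q j ≤ c) :
    -c ≤ Real.sqrt (fsq ((∑ ℓ, g * A ℓ * hᴴ * h * (A ℓ)ᴴ * gᴴ)
        - ((n : ℂ))⁻¹ • (1 : Matrix (Fin n) (Fin n) ℂ))
      + fsq ((∑ ℓ, h * (A ℓ)ᴴ * gᴴ * g * A ℓ * hᴴ)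
        - ((m : ℂ))⁻¹ • (1 : Matrix (Fin m) (Fin m) ℂ))) := by
  obtain ⟨U, hU, hU', hUt⟩ := exists_qr (g * σᴴ) p
  obtain ⟨V, hV, hV', hVt⟩ := exists_qr (h * τᴴ) q
  let B : Fin N → Matrix (Fin n) (Fin m) ℂ := fun ℓ => Uᴴ * (g * A ℓ * hᴴ) * V
  have hB : ∑ ℓ, fsq (B ℓ) = 1 := by
    rw [← hgh]
    refine Finset.sum_congr rfl fun ℓ _ => ?_
    rw [fsq_mul_right V hV', fsq_mul_left Uᴴ (by simpa using hU')]
  have hBB : ∀ ℓ, B ℓ = (Uᴴ * (g * σᴴ)) * (σ * A ℓ * τᴴ) * (Vᴴ * (h * τᴴ))ᴴ := by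
    intro ℓ
    calc B ℓ = Uᴴ * (g * ((1 : Matrix (Fin n) (Fin n) ℂ) * A ℓ *
          (1 : Matrix (Fin m) (Fin m) ℂ)) * hᴴ) * V := by simp [B]
      _ = Uᴴ * (g * ((σᴴ * σ) * A ℓ * (τᴴ * τ)) * hᴴ) * V := by rw [hσ, hτ]
      _ = _ := by
        simp only [conjTranspose_mul, conjTranspose_conjTranspose, Matrix.mul_assoc]
  have main := weak_aux B hB p q hp hq hpq c (by
    intro ℓ i j hne
    rw [hBB] at hne
    exact supp_triangular _ _ _ p q c hUt hVt (hc ℓ) i j hne)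
  have e1 : (∑ ℓ, B ℓ * (B ℓ)ᴴ) - ((n : ℂ))⁻¹ • (1 : Matrix (Fin n) (Fin n) ℂ)
      = Uᴴ * ((∑ ℓ, g * A ℓ * hᴴ * h * (A ℓ)ᴴ * gᴴ)
        - ((n : ℂ))⁻¹ • (1 : Matrix (Fin n) (Fin n) ℂ)) * U := by
    rw [Matrix.mul_sub, Matrix.sub_mul, Matrix.mul_sum, Matrix.sum_mul]
    congr 1
    · refine Finset.sum_congr rfl fun ℓ _ => ?_
      calc B ℓ * (B ℓ)ᴴ = Uᴴ * (g * A ℓ * hᴴ) * (V * Vᴴ) * (g * A ℓ * hᴴ)ᴴ * U := by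
            simp only [B, conjTranspose_mul, conjTranspose_conjTranspose, Matrix.mul_assoc]
        _ = _ := by
          rw [hV']
          simp only [conjTranspose_mul, conjTranspose_conjTranspose, Matrix.mul_assoc,
            Matrix.one_mul]
    · simp [hU]
  have e2 : (∑ ℓ, (B ℓ)ᴴ * (B ℓ)) - ((m : ℂ))⁻¹ • (1 : Matrix (Fin m) (Fin m) ℂ)
      = Vᴴ * ((∑ ℓ, h * (A ℓ)ᴴ * gᴴ * g * A ℓ * hᴴ)
        - ((m : ℂ))⁻¹ • (1 : Matrix (Fin m) (Fin m) ℂ)) * V := by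
    rw [Matrix.mul_sub, Matrix.sub_mul, Matrix.mul_sum, Matrix.sum_mul]
    congr 1
    · refine Finset.sum_congr rfl fun ℓ _ => ?_
      calc (B ℓ)ᴴ * (B ℓ) = Vᴴ * (g * A ℓ * hᴴ)ᴴ * (U * Uᴴ) * (g * A ℓ * hᴴ) * V := by
            simp only [B, conjTranspose_mul, conjTranspose_conjTranspose, Matrix.mul_assoc]
        _ = _ := by
          rw [hU']
          simp only [conjTranspose_mul, conjTranspose_conjTranspose, Matrix.mul_assoc,
            Matrix.one_mul]
    · simp [hV]
  rw [e1, e2, fsq_mul_right U hU', fsq_mul_left Uᴴ (by simpa using hU'), fsq_mul_right V hV',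
    fsq_mul_left Vᴴ (by simpa using hV')] at main
  exact main

lemma eq_zero_of_fsq {a b : ℕ} (M : Matrix (Fin a) (Fin b) ℂ) (h : fsq M = 0) : M = 0 := by
  ext i j
  unfold fsq at h
  rw [Finset.sum_eq_zero_iff_of_nonneg (fun i _ => by positivity)] at h
  have h1 := h i (Finset.mem_univ i)
  rw [Finset.sum_eq_zero_iff_of_nonneg (fun i _ => by positivity)] at h1
  simpa using h1 j (Finset.mem_univ j)

/-- Unitary diagonalisation of Hermitian matrices. -/
lemma exists_diag {n : ℕ} (P : Matrix (Fin n) (Fin n) ℂ) (hP : P.IsHermitian) :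
    ∃ (U : Matrix (Fin n) (Fin n) ℂ) (p : Fin n → ℝ), Uᴴ * U = 1 ∧ U * Uᴴ = 1 ∧
      P = Uᴴ * diagonal (fun i => (p i : ℂ)) * U := by
  have h := hP.spectral_theorem
  have hu := hP.eigenvectorUnitary.2
  rw [Matrix.mem_unitaryGroup_iff] at hu
  have hu' := mul_eq_one_comm.mp hu
  refine ⟨(hP.eigenvectorUnitary : Matrix (Fin n) (Fin n) ℂ)ᴴ, hP.eigenvalues, ?_, ?_, ?_⟩
  · rw [conjTranspose_conjTranspose]; exact hu
  · rw [conjTranspose_conjTranspose]; exact hu'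
  · rw [conjTranspose_conjTranspose]
    rw [Unitary.conjStarAlgAut_apply] at h
    exact h

lemma exp_conj_diag {n : ℕ} (U : Matrix (Fin n) (Fin n) ℂ) (hU : Uᴴ * U = 1) (hU' : U * Uᴴ = 1)
    (p : Fin n → ℝ) :
    NormedSpace.exp (Uᴴ * diagonal (fun i => (p i : ℂ)) * U)
      = Uᴴ * diagonal (fun i => (Real.exp (p i) : ℂ)) * U := by
  have := Matrix.exp_units_conj ⟨Uᴴ, U, hU, hU'⟩ (diagonal (fun i => (p i : ℂ)))
  simp only [Units.inv_mk] at this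
  rw [this, Matrix.exp_diagonal]
  congr 3
  ext i
  rw [Pi.coe_exp, ← Complex.exp_eq_exp_ℂ]
  simp

lemma commute_of_commute_exp {n : ℕ} (P M : Matrix (Fin n) (Fin n) ℂ) (hP : P.IsHermitian)
    (h : NormedSpace.exp P * M = M * NormedSpace.exp P) : P * M = M * P := by
  obtain ⟨U, p, hU, hU', rfl⟩ := exists_diag P hP
  rw [exp_conj_diag U hU hU'] at h
  have key : ∀ d : Fin n → ℂ, (Uᴴ * diagonal d * U * M = M * (Uᴴ * diagonal d * U)) ↔
      diagonal d * (U * M * Uᴴ) = (U * M * Uᴴ) * diagonal d := by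
    intro d
    constructor
    · intro h
      calc diagonal d * (U * M * Uᴴ) = (U * Uᴴ) * diagonal d * (U * M * Uᴴ) := by
            rw [hU', Matrix.one_mul]
        _ = U * (Uᴴ * diagonal d * U * M) * Uᴴ := by simp only [Matrix.mul_assoc]
        _ = U * M * Uᴴ * diagonal d * (U * Uᴴ) := by rw [h]; simp only [Matrix.mul_assoc]
        _ = _ := by rw [hU', Matrix.mul_one]
    · intro h
      calc Uᴴ * diagonal d * U * M = Uᴴ * diagonal d * U * M * (Uᴴ * U) := by
            rw [hU, Matrix.mul_one]
        _ = Uᴴ * (diagonal d * (U * M * Uᴴ)) * U := by simp only [Matrix.mul_assoc]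
        _ = (Uᴴ * U) * M * (Uᴴ * diagonal d * U) := by rw [h]; simp only [Matrix.mul_assoc]
        _ = _ := by rw [hU, Matrix.one_mul]
  rw [key] at h ⊢
  ext i j
  have hij := congrFun (congrFun h i) j
  rw [diagonal_mul, mul_diagonal, mul_comm] at hij ⊢
  by_cases h0 : (U * M * Uᴴ) i j = 0
  · simp [h0]
  · have := mul_left_cancel₀ h0 hij
    have h2 : p i = p j := Real.exp_injective (by exact_mod_cast this)
    rw [h2]

/-- real part of the trace -/
noncomputable def reTr {n : ℕ} (M : Matrix (Fin n) (Fin n) ℂ) : ℝ := (trace M).re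

lemma reTr_add {n : ℕ} (X Y : Matrix (Fin n) (Fin n) ℂ) : reTr (X + Y) = reTr X + reTr Y := by
  simp [reTr]

lemma reTr_sub {n : ℕ} (X Y : Matrix (Fin n) (Fin n) ℂ) : reTr (X - Y) = reTr X - reTr Y := by
  simp [reTr]

lemma reTr_neg {n : ℕ} (X : Matrix (Fin n) (Fin n) ℂ) : reTr (-X) = - reTr X := by
  simp [reTr]

lemma reTr_smul {n : ℕ} (c : ℝ) (X : Matrix (Fin n) (Fin n) ℂ) :
    reTr ((c : ℂ) • X) = c * reTr X := by
  simp [reTr]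

lemma reTr_rsmul {n : ℕ} (c : ℝ) (X : Matrix (Fin n) (Fin n) ℂ) :
    reTr (c • X) = c * reTr X := by
  simp [reTr]

lemma reTr_mul_comm {n m : ℕ} (X : Matrix (Fin n) (Fin m) ℂ) (Y : Matrix (Fin m) (Fin n) ℂ) :
    reTr (X * Y) = reTr (Y * X) := by
  unfold reTr; rw [Matrix.trace_mul_comm]

section
open scoped Matrix.Norms.Frobenius

lemma hasDerivAt_reTr {n : ℕ} (F : ℝ → Matrix (Fin n) (Fin n) ℂ) (F' : Matrix (Fin n) (Fin n) ℂ)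
    (h : HasDerivAt F F' 0) : HasDerivAt (fun s => reTr (F s)) (reTr F') 0 := by
  let T : Matrix (Fin n) (Fin n) ℂ →L[ℝ] ℝ := LinearMap.toContinuousLinearMap
    (Complex.reLm ∘ₗ ((Matrix.traceLinearMap (Fin n) ℂ ℂ).restrictScalars ℝ))
  exact T.hasFDerivAt.comp_hasDerivAt (0 : ℝ) h

lemma hasDerivAt_exp_smul {n : ℕ} (K : Matrix (Fin n) (Fin n) ℂ) :
    HasDerivAt (fun s : ℝ => NormedSpace.exp (s • K)) K 0 := by
  have : HasDerivAt (fun s : ℝ => NormedSpace.exp (s • K))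
      (NormedSpace.exp ((0 : ℝ) • K) * K) 0 := hasDerivAt_exp_smul_const (𝕂 := ℝ) K 0
  have e : NormedSpace.exp ((0 : ℝ) • K) * K = K := by simp
  rw [e] at this
  exact this

lemma deriv_conj {n : ℕ} (K E M : Matrix (Fin n) (Fin n) ℂ) :
    HasDerivAt (fun s : ℝ =>
      reTr (NormedSpace.exp (s • K) * E * NormedSpace.exp (s • (-K)) * M))
      (reTr ((K * E - E * K) * M)) 0 := by
  have h1 := (((hasDerivAt_exp_smul K).mul_const E).mul (hasDerivAt_exp_smul (-K))).mul_const M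
  have e : (K * E * NormedSpace.exp ((0 : ℝ) • -K) + NormedSpace.exp ((0 : ℝ) • K) * E * -K) * M
      = (K * E - E * K) * M := by
    simp [sub_eq_add_neg]
  rw [e] at h1
  exact hasDerivAt_reTr _ _ h1

lemma deriv_left {n : ℕ} (H C : Matrix (Fin n) (Fin n) ℂ) :
    HasDerivAt (fun s : ℝ => reTr (NormedSpace.exp (s • H) * C)) (reTr (H * C)) 0 :=
  hasDerivAt_reTr _ _ ((hasDerivAt_exp_smul H).mul_const C)

end

lemma deriv_sq {n : ℕ} (P H : Matrix (Fin n) (Fin n) ℂ) :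
    HasDerivAt (fun s : ℝ => reTr ((P + s • H) * (P + s • H))) (2 * reTr (H * P)) 0 := by
  have : (fun s : ℝ => reTr ((P + s • H) * (P + s • H)))
      = fun s => reTr (P * P) + s * (2 * reTr (H * P)) + s * s * reTr (H * H) := by
    funext s
    simp only [Matrix.add_mul, Matrix.mul_add, Matrix.smul_mul, Matrix.mul_smul, reTr_add,
      reTr_rsmul]
    rw [reTr_mul_comm P H]
    ring
  rw [this]
  have hid := hasDerivAt_id (0 : ℝ)
  have h := ((hid.mul_const (2 * reTr (H * P))).const_add (reTr (P * P))).add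
    ((hid.mul hid).mul_const (reTr (H * H)))
  refine (h.congr_deriv ?_)
  simp

lemma fsq_herm {n : ℕ} (P : Matrix (Fin n) (Fin n) ℂ) (hP : P.IsHermitian) :
    fsq P = reTr (P * P) := by
  rw [fsq_eq_trace, hP.eq]; rfl

lemma crit_commute {n : ℕ} (M P : Matrix (Fin n) (Fin n) ℂ) (hM : M.IsHermitian)
    (hP : P.IsHermitian) (htr : trace P = 0) (ε : ℝ)
    (hpos : 0 < reTr (NormedSpace.exp P * M))
    (hmin : ∀ P' : Matrix (Fin n) (Fin n) ℂ, P'.IsHermitian → trace P' = 0 →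
      Real.log (reTr (NormedSpace.exp P * M)) + ε / 2 * fsq P
        ≤ Real.log (reTr (NormedSpace.exp P' * M)) + ε / 2 * fsq P') :
    P * M = M * P := by
  apply commute_of_commute_exp P M hP
  set E := NormedSpace.exp P with hE
  have hEh : Eᴴ = E := hP.exp
  set K := M * E - E * M with hK
  have hKh : Kᴴ = -K := by
    rw [hK, conjTranspose_sub, conjTranspose_mul, conjTranspose_mul, hM.eq, hEh]; abel
  let ψ : ℝ → ℝ := fun s => reTr (NormedSpace.exp (s • K) * E * NormedSpace.exp (s • (-K)) * M)
  have hψ0 : ψ 0 = reTr (E * M) := by simp [ψ]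
  have hψ' : HasDerivAt ψ (fsq K) 0 := by
    refine (deriv_conj K E M).congr_deriv ?_
    rw [fsq_eq_trace, hKh]
    change _ = reTr _
    have e1 : K * -K = K * (E * M) - K * (M * E) := by
      rw [← Matrix.mul_sub]; congr 1; rw [hK]; abel
    rw [e1, Matrix.sub_mul, reTr_sub, reTr_sub, Matrix.mul_assoc K E M]
    congr 1
    rw [Matrix.mul_assoc, reTr_mul_comm, Matrix.mul_assoc]
  have hloc : IsLocalMin (fun s => Real.log (ψ s)) 0 := by
    refine Filter.Eventually.of_forall fun s => ?_
    set W := NormedSpace.exp (s • K) with hW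
    have hWn : NormedSpace.exp (s • (-K)) = Wᴴ := by
      rw [hW, ← Matrix.exp_conjTranspose, conjTranspose_smul, hKh]; simp
    have hWW : W * Wᴴ = 1 := by
      rw [← hWn, hW, ← Matrix.exp_add_of_commute]
      · simp
      · simp
    have hWW' : Wᴴ * W = 1 := mul_eq_one_comm.mp hWW
    have h1 := hmin (W * P * Wᴴ) (by
        unfold Matrix.IsHermitian
        simp only [conjTranspose_mul, conjTranspose_conjTranspose, hP.eq, Matrix.mul_assoc])
      (by rw [Matrix.trace_mul_comm, ← Matrix.mul_assoc, hWW', Matrix.one_mul, htr])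
    rw [fsq_mul_right _ (by simpa using hWW'), fsq_mul_left _ hWW'] at h1
    have h2 := Matrix.exp_units_conj ⟨W, Wᴴ, hWW, hWW'⟩ P
    simp only [Units.inv_mk] at h2
    rw [h2] at h1
    simp only [hψ0]
    simp only [ψ, hWn]
    linarith
  have h3 := hloc.hasDerivAt_eq_zero (hψ'.log (by rw [hψ0]; exact hpos.ne'))
  rw [div_eq_zero_iff] at h3
  have h4 : fsq K = 0 := by
    rcases h3 with h | h
    · exact h
    · rw [hψ0] at h; exact absurd h hpos.ne'
  have h5 := eq_zero_of_fsq K h4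
  rw [hK, sub_eq_zero] at h5
  exact h5.symm

lemma crit_eq {n : ℕ} (hn : 1 ≤ n) (M P : Matrix (Fin n) (Fin n) ℂ) (hM : M.IsHermitian)
    (hP : P.IsHermitian) (htr : trace P = 0) (ε : ℝ)
    (hpos : 0 < reTr (NormedSpace.exp P * M))
    (hmin : ∀ P' : Matrix (Fin n) (Fin n) ℂ, P'.IsHermitian → trace P' = 0 →
      Real.log (reTr (NormedSpace.exp P * M)) + ε / 2 * fsq P
        ≤ Real.log (reTr (NormedSpace.exp P' * M)) + ε / 2 * fsq P') :
    (((reTr (NormedSpace.exp P * M))⁻¹ : ℝ) : ℂ) • (NormedSpace.exp P * M)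
      - ((n : ℂ))⁻¹ • (1 : Matrix (Fin n) (Fin n) ℂ) = -((ε : ℂ) • P) := by
  have hc := crit_commute M P hM hP htr ε hpos hmin
  have hn0 : (n : ℂ) ≠ 0 := by exact_mod_cast (by omega : n ≠ 0)
  have hEc : NormedSpace.exp P * M = M * NormedSpace.exp P := by
    have : Commute P M := hc
    exact (this.exp_left).eq
  have hEP : NormedSpace.exp P * P = P * NormedSpace.exp P := by
    exact ((Commute.refl P).exp_left).eq
  set E := NormedSpace.exp P with hE
  have hEh : Eᴴ = E := hP.exp
  set Φ := reTr (E * M) with hΦ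
  have hEMh : (E * M)ᴴ = E * M := by rw [conjTranspose_mul, hM.eq, hEh, hEc]
  have htrEM : trace (E * M) = (Φ : ℂ) := by
    have h1 : star (trace (E * M)) = trace (E * M) := by
      rw [← Matrix.trace_conjTranspose, hEMh]
    have := Complex.conj_eq_iff_re.mp h1
    rw [← this]; rfl
  set H := (((Φ)⁻¹ : ℝ) : ℂ) • (E * M) - ((n : ℂ))⁻¹ • (1 : Matrix (Fin n) (Fin n) ℂ)
    + (ε : ℂ) • P with hH
  have hHh : Hᴴ = H := by
    rw [hH, conjTranspose_add, conjTranspose_sub, conjTranspose_smul, conjTranspose_smul,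
      conjTranspose_smul, hEMh, hP.eq]
    simp
  have hHtr : trace H = 0 := by
    rw [hH, Matrix.trace_add, Matrix.trace_sub, Matrix.trace_smul, Matrix.trace_smul,
      Matrix.trace_smul, htr, htrEM]
    have : (Φ : ℂ) ≠ 0 := by exact_mod_cast hpos.ne'
    simp [hn0, this]
  have hHP : Commute H P := by
    have h1 : Commute (E * M) P := by
      have a : Commute E P := hEP
      have b : Commute M P := hc.symm
      exact a.mul_left b
    refine ((h1.smul_left _).sub_left ((Commute.one_left P).smul_left _)).add_left
      ((Commute.refl P).smul_left _)
  have hexp : ∀ s : ℝ, NormedSpace.exp (P + s • H) = NormedSpace.exp (s • H) * E := by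
    intro s
    rw [add_comm, Matrix.exp_add_of_commute _ _ (hHP.smul_left s)]
  let ψ : ℝ → ℝ := fun s => reTr (NormedSpace.exp (s • H) * (E * M))
  have hψ0 : ψ 0 = Φ := by simp [ψ, hΦ]
  have hψ' : HasDerivAt ψ (reTr (H * (E * M))) 0 := deriv_left H (E * M)
  have hsq := deriv_sq P H
  have htot := (hψ'.log (by rw [hψ0]; exact hpos.ne')).add (hsq.const_mul (ε / 2))
  have hherm : ∀ s : ℝ, (P + s • H).IsHermitian := by
    intro s
    unfold Matrix.IsHermitian
    rw [conjTranspose_add, conjTranspose_smul, hP.eq, hHh]; simp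
  have hloc : IsLocalMin (fun s : ℝ => Real.log (ψ s)
      + ε / 2 * reTr ((P + s • H) * (P + s • H))) 0 := by
    refine Filter.Eventually.of_forall fun s => ?_
    have h1 := hmin (P + s • H) (hherm s) (by
      rw [Matrix.trace_add, Matrix.trace_smul, htr, hHtr]; simp)
    rw [fsq_herm P hP, fsq_herm _ (hherm s), hexp] at h1
    simp only [hψ0]
    simpa [ψ, Matrix.mul_assoc] using h1
  have h3 := hloc.hasDerivAt_eq_zero htot
  rw [hψ0] at h3
  have h4 : fsq H = 0 := by
    rw [← h3, fsq_herm H hHh]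
    have e1 : H * H = ((Φ⁻¹ : ℝ) : ℂ) • (H * (E * M)) - ((n : ℂ))⁻¹ • H + (ε : ℂ) • (H * P) := by
      nth_rewrite 2 [hH]
      rw [Matrix.mul_add, Matrix.mul_sub, Matrix.mul_smul, Matrix.mul_smul, Matrix.mul_smul,
        Matrix.mul_one]
    have e2 : reTr (((n : ℂ))⁻¹ • H) = 0 := by
      unfold reTr; rw [Matrix.trace_smul, hHtr]; simp
    rw [e1, reTr_add, reTr_sub, reTr_smul, reTr_smul, e2]
    ring
  have h5 := eq_zero_of_fsq H h4
  rw [hH] at h5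
  exact eq_neg_of_add_eq_zero_left h5


/-- The Kempf–Ness type function in exponential coordinates. -/
noncomputable def Phi {N n m : ℕ} (A : Fin N → Matrix (Fin n) (Fin m) ℂ)
    (P : Matrix (Fin n) (Fin n) ℂ) (Q : Matrix (Fin m) (Fin m) ℂ) : ℝ :=
  ∑ ℓ, reTr (NormedSpace.exp P * A ℓ * NormedSpace.exp Q * (A ℓ)ᴴ)

lemma trace_formula {N n m : ℕ} (A : Fin N → Matrix (Fin n) (Fin m) ℂ)
    (U : Matrix (Fin n) (Fin n) ℂ) (V : Matrix (Fin m) (Fin m) ℂ)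
    (d : Fin n → ℝ) (e : Fin m → ℝ) :
    ∑ ℓ, reTr (Uᴴ * diagonal (fun i => (d i : ℂ)) * U * A ℓ
      * (Vᴴ * diagonal (fun i => (e i : ℂ)) * V) * (A ℓ)ᴴ)
    = ∑ x : Fin N × Fin n × Fin m, d x.2.1 * e x.2.2 * ‖(U * A x.1 * Vᴴ) x.2.1 x.2.2‖ ^ 2 := by
  rw [Fintype.sum_prod_type]
  refine Finset.sum_congr rfl fun ℓ _ => ?_
  rw [Fintype.sum_prod_type]
  have h1 : reTr (Uᴴ * diagonal (fun i => (d i : ℂ)) * U * A ℓ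
      * (Vᴴ * diagonal (fun i => (e i : ℂ)) * V) * (A ℓ)ᴴ)
      = reTr (diagonal (fun i => (d i : ℂ)) * ((U * A ℓ * Vᴴ) * diagonal (fun i => (e i : ℂ))
          * (U * A ℓ * Vᴴ)ᴴ)) := by
    have : Uᴴ * diagonal (fun i => (d i : ℂ)) * U * A ℓ
      * (Vᴴ * diagonal (fun i => (e i : ℂ)) * V) * (A ℓ)ᴴ = Uᴴ * (diagonal (fun i => (d i : ℂ))
        * (U * A ℓ * Vᴴ * diagonal (fun i => (e i : ℂ)) * V * (A ℓ)ᴴ)) := by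
      simp only [Matrix.mul_assoc]
    rw [this, reTr_mul_comm]
    congr 1
    simp only [Matrix.mul_assoc, conjTranspose_mul, conjTranspose_conjTranspose]
  rw [h1]
  simp only
  generalize U * A ℓ * Vᴴ = B
  unfold reTr
  simp only [trace, diag_apply, diagonal_mul, Complex.re_sum]
  refine Finset.sum_congr rfl fun i _ => ?_
  rw [Matrix.mul_apply, Finset.mul_sum, Complex.re_sum]
  refine Finset.sum_congr rfl fun j _ => ?_
  rw [mul_diagonal, conjTranspose_apply, ← Complex.normSq_eq_norm_sq]
  simp [Complex.normSq_apply]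
  ring

lemma smul_conj_diag {n : ℕ} (U : Matrix (Fin n) (Fin n) ℂ) (p : Fin n → ℝ) (s : ℝ) :
    s • (Uᴴ * diagonal (fun i => (p i : ℂ)) * U)
      = Uᴴ * diagonal (fun i => ((s * p i : ℝ) : ℂ)) * U := by
  rw [← Matrix.smul_mul, ← Matrix.mul_smul]
  congr 2
  ext i j
  by_cases h : i = j
  · subst h; simp
  · simp [h]

lemma Phi_formula {N n m : ℕ} (A : Fin N → Matrix (Fin n) (Fin m) ℂ)
    (U : Matrix (Fin n) (Fin n) ℂ) (hU : Uᴴ * U = 1) (hU' : U * Uᴴ = 1)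
    (V : Matrix (Fin m) (Fin m) ℂ) (hV : Vᴴ * V = 1) (hV' : V * Vᴴ = 1)
    (p : Fin n → ℝ) (q : Fin m → ℝ) (s : ℝ) :
    Phi A (s • (Uᴴ * diagonal (fun i => (p i : ℂ)) * U))
      (s • (Vᴴ * diagonal (fun i => (q i : ℂ)) * V))
    = ∑ x : Fin N × Fin n × Fin m,
      ‖(U * A x.1 * Vᴴ) x.2.1 x.2.2‖ ^ 2 * Real.exp (s * (p x.2.1 + q x.2.2)) := by
  unfold Phi
  rw [smul_conj_diag, smul_conj_diag, exp_conj_diag U hU hU', exp_conj_diag V hV hV',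
    trace_formula]
  refine Finset.sum_congr rfl fun x _ => ?_
  rw [mul_add, Real.exp_add]; ring

lemma fsq_conj_diag {n : ℕ} (U : Matrix (Fin n) (Fin n) ℂ) (hU : Uᴴ * U = 1) (hU' : U * Uᴴ = 1)
    (p : Fin n → ℝ) : fsq (Uᴴ * diagonal (fun i => (p i : ℂ)) * U) = ∑ i, p i ^ 2 := by
  rw [fsq_mul_right U hU', fsq_mul_left Uᴴ (by simpa using hU')]
  unfold fsq
  refine Finset.sum_congr rfl fun i _ => ?_
  rw [Finset.sum_eq_single i]
  · simp
  · intro j _ hj; simp [hj.symm]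
  · simp

lemma trace_conj_diag {n : ℕ} (U : Matrix (Fin n) (Fin n) ℂ) (hU' : U * Uᴴ = 1)
    (p : Fin n → ℝ) : trace (Uᴴ * diagonal (fun i => (p i : ℂ)) * U) = ((∑ i, p i : ℝ) : ℂ) := by
  rw [Matrix.trace_mul_comm, ← Matrix.mul_assoc, hU', Matrix.one_mul, trace_diagonal]
  simp

lemma ray_real {ι : Type*} [Fintype ι] (w c : ι → ℝ) (hw : ∀ i, 0 ≤ w i) (κ : ℝ)
    (hslope : ∑ i, w i * Real.exp (c i) * c i ≤ -κ * ∑ i, w i * Real.exp (c i))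
    (s : ℝ) (hs0 : 0 ≤ s) (hs1 : s ≤ 1) :
    ∑ i, w i * Real.exp (s * c i) ≤ (∑ i, w i) * Real.exp (-(s * κ)) := by
  have h1 : ∑ i, w i * Real.exp (c i + κ) ≤ ∑ i, w i := by
    have a : ∀ i, w i * Real.exp (c i + κ) * (1 - c i - κ) ≤ w i := by
      intro i
      have h := Real.add_one_le_exp (-c i - κ)
      have e : Real.exp (c i + κ) * Real.exp (-c i - κ) = 1 := by
        rw [← Real.exp_add]; simp
      calc w i * Real.exp (c i + κ) * (1 - c i - κ)
          = w i * (Real.exp (c i + κ) * (-c i - κ + 1)) := by ring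
        _ ≤ w i * (Real.exp (c i + κ) * Real.exp (-c i - κ)) := by
          have := hw i
          gcongr
        _ = w i := by rw [e, mul_one]
    have b := Finset.sum_le_sum fun i (_ : i ∈ Finset.univ) => a i
    refine le_trans ?_ b
    have e : ∑ i, w i * Real.exp (c i + κ) * (1 - c i - κ)
        = ∑ i, w i * Real.exp (c i + κ) + Real.exp κ *
          (-κ * (∑ i, w i * Real.exp (c i)) - ∑ i, w i * Real.exp (c i) * c i) := by
      rw [mul_sub, Finset.mul_sum, Finset.mul_sum, Finset.mul_sum, ← Finset.sum_sub_distrib,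
        ← Finset.sum_add_distrib]
      refine Finset.sum_congr rfl fun i _ => ?_
      rw [Real.exp_add]; ring
    rw [e]
    have : 0 ≤ Real.exp κ *
          (-κ * (∑ i, w i * Real.exp (c i)) - ∑ i, w i * Real.exp (c i) * c i) :=
      mul_nonneg (Real.exp_pos _).le (by linarith)
    linarith
  have h2 : ∀ i, w i * Real.exp (s * c i)
      ≤ Real.exp (-(s * κ)) * ((1 - s) * w i + s * (w i * Real.exp (c i + κ))) := by
    intro i
    have hc := convexOn_exp.2 (Set.mem_univ 0) (Set.mem_univ (c i + κ))
      (by linarith : (0 : ℝ) ≤ 1 - s) hs0 (by ring)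
    simp only [smul_eq_mul, mul_zero, zero_add, Real.exp_zero, mul_one] at hc
    have e : Real.exp (s * c i) = Real.exp (-(s * κ)) * Real.exp (s * (c i + κ)) := by
      rw [← Real.exp_add]; congr 1; ring
    calc w i * Real.exp (s * c i) = Real.exp (-(s * κ)) * (w i * Real.exp (s * (c i + κ))) := by
          rw [e]; ring
      _ ≤ Real.exp (-(s * κ)) * (w i * (1 - s + s * Real.exp (c i + κ))) := by
          have := hw i
          gcongr
      _ = _ := by ring
  refine (Finset.sum_le_sum fun i _ => h2 i).trans ?_
  rw [← Finset.mul_sum, Finset.sum_add_distrib, ← Finset.mul_sum, ← Finset.mul_sum, mul_comm]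
  have := (Real.exp_pos (-(s * κ))).le
  refine mul_le_mul_of_nonneg_right ?_ this
  nlinarith

section
open scoped Matrix.Norms.Frobenius
lemma continuous_mexp (n : ℕ) :
    Continuous (fun P : Matrix (Fin n) (Fin n) ℂ => NormedSpace.exp P) :=
  NormedSpace.exp_continuous
end

lemma continuous_Phi {N n m : ℕ} (A : Fin N → Matrix (Fin n) (Fin m) ℂ) :
    Continuous (fun x : Matrix (Fin n) (Fin n) ℂ × Matrix (Fin m) (Fin m) ℂ => Phi A x.1 x.2) := by
  unfold Phi reTr
  refine continuous_finsetSum _ fun ℓ _ => Complex.continuous_re.comp ?_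
  refine Continuous.matrix_trace ?_
  exact ((((continuous_mexp n).comp continuous_fst).matrix_mul continuous_const).matrix_mul
    ((continuous_mexp m).comp continuous_snd)).matrix_mul continuous_const

lemma continuous_fsq {a b : ℕ} :
    Continuous (fun M : Matrix (Fin a) (Fin b) ℂ => fsq M) := by
  unfold fsq
  refine continuous_finsetSum _ fun i _ => continuous_finsetSum _ fun j _ => ?_
  exact ((continuous_id.matrix_elem i j).norm).pow 2

/-- feasible set -/
def feas (n m : ℕ) (R : ℝ) : Set (Matrix (Fin n) (Fin n) ℂ × Matrix (Fin m) (Fin m) ℂ) :=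
  {x | x.1.IsHermitian ∧ x.2.IsHermitian ∧ trace x.1 = 0 ∧ trace x.2 = 0 ∧
    fsq x.1 + fsq x.2 ≤ R ^ 2}

lemma norm_entry_le {a b : ℕ} (M : Matrix (Fin a) (Fin b) ℂ) (R : ℝ) (hR : 0 ≤ R)
    (h : fsq M ≤ R ^ 2) (i : Fin a) (j : Fin b) : ‖M i j‖ ≤ R := by
  refine abs_le_of_sq_le_sq' ?_ hR |>.2
  refine le_trans ?_ h
  refine le_trans ?_ (Finset.single_le_sum (f := fun i => ∑ j, ‖M i j‖ ^ 2)
    (fun i _ => by positivity) (Finset.mem_univ i))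
  exact Finset.single_le_sum (f := fun j => ‖M i j‖ ^ 2)
    (fun i _ => by positivity) (Finset.mem_univ j)

lemma isCompact_feas (n m : ℕ) (R : ℝ) (hR : 0 ≤ R) : IsCompact (feas n m R) := by
  have hbox : ∀ a : ℕ, IsCompact {M : Matrix (Fin a) (Fin a) ℂ | ∀ i j, ‖M i j‖ ≤ R} := by
    intro a
    have h := isCompact_univ_pi (X := fun _ : Fin a => Fin a → ℂ)
      (fun i : Fin a => isCompact_univ_pi
        (fun j : Fin a => isCompact_closedBall (0 : ℂ) R))
    have e : {M : Matrix (Fin a) (Fin a) ℂ | ∀ i j, ‖M i j‖ ≤ R} =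
      (Set.univ.pi fun i : Fin a => Set.univ.pi fun j : Fin a => Metric.closedBall (0 : ℂ) R) := by
      ext M
      constructor
      · intro hM i _ j _
        exact mem_closedBall_zero_iff.mpr (hM i j)
      · intro hM i j
        exact mem_closedBall_zero_iff.mp (hM i trivial j trivial)
    rw [e]; exact h
  refine IsCompact.of_isClosed_subset ((hbox n).prod (hbox m)) ?_ ?_
  · have c1 : Continuous (fun x : Matrix (Fin n) (Fin n) ℂ × Matrix (Fin m) (Fin m) ℂ => x.1) :=
      continuous_fst
    have c2 : Continuous (fun x : Matrix (Fin n) (Fin n) ℂ × Matrix (Fin m) (Fin m) ℂ => x.2) :=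
      continuous_snd
    refine (isClosed_eq c1.matrix_conjTranspose c1).inter
      ((isClosed_eq c2.matrix_conjTranspose c2).inter
      ((isClosed_eq c1.matrix_trace continuous_const).inter
      ((isClosed_eq c2.matrix_trace continuous_const).inter
      (isClosed_le ((continuous_fsq.comp c1).add (continuous_fsq.comp c2)) continuous_const))))
  · rintro ⟨P, Q⟩ ⟨-, -, -, -, h⟩
    have h1 := fsq_nonneg P
    have h2 := fsq_nonneg Q
    simp only at h
    exact ⟨fun i j => norm_entry_le P R hR (by linarith) i j,
      fun i j => norm_entry_le Q R hR (by linarith) i j⟩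

lemma Phi_zero {N n m : ℕ} (A : Fin N → Matrix (Fin n) (Fin m) ℂ) :
    Phi A 0 0 = ∑ ℓ, fsq (A ℓ) := by
  unfold Phi
  refine Finset.sum_congr rfl fun ℓ _ => ?_
  rw [fsq_eq_trace]; simp [reTr]

lemma Phi_lower {N n m : ℕ} (A : Fin N → Matrix (Fin n) (Fin m) ℂ)
    (P : Matrix (Fin n) (Fin n) ℂ) (Q : Matrix (Fin m) (Fin m) ℂ)
    (hP : P.IsHermitian) (hQ : Q.IsHermitian) (r : ℝ) (hr : 0 ≤ r) (h : fsq P + fsq Q ≤ r ^ 2) :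
    Phi A 0 0 * Real.exp (-(2 * r)) ≤ Phi A P Q := by
  obtain ⟨U, p, hU, hU', rfl⟩ := exists_diag P hP
  obtain ⟨V, q, hV, hV', rfl⟩ := exists_diag Q hQ
  have h1 := Phi_formula A U hU hU' V hV hV' p q 1
  have h0 := Phi_formula A U hU hU' V hV hV' p q 0
  simp only [one_smul, zero_smul] at h1 h0
  rw [h1, h0, Finset.sum_mul]
  rw [fsq_conj_diag U hU hU', fsq_conj_diag V hV hV'] at h
  have hp : ∀ i, -r ≤ p i := by
    intro i
    refine (abs_le_of_sq_le_sq' ?_ hr).1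
    have a := Finset.single_le_sum (f := fun i => p i ^ 2)
      (fun i _ => by positivity) (Finset.mem_univ i)
    have b : 0 ≤ ∑ i, q i ^ 2 := by positivity
    linarith
  have hq : ∀ i, -r ≤ q i := by
    intro i
    refine (abs_le_of_sq_le_sq' ?_ hr).1
    have a := Finset.single_le_sum (f := fun i => q i ^ 2)
      (fun i _ => by positivity) (Finset.mem_univ i)
    have b : 0 ≤ ∑ i, p i ^ 2 := by positivity
    linarith
  refine Finset.sum_le_sum fun x _ => ?_
  have a := hp x.2.1
  have b := hq x.2.2
  simp only [zero_mul, Real.exp_zero, mul_one, one_mul]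
  gcongr
  linarith

lemma exists_min {N n m : ℕ} (A : Fin N → Matrix (Fin n) (Fin m) ℂ) (h0 : 0 < Phi A 0 0)
    (ε : ℝ) (hε : 0 < ε) :
    ∃ (P : Matrix (Fin n) (Fin n) ℂ) (Q : Matrix (Fin m) (Fin m) ℂ),
      P.IsHermitian ∧ Q.IsHermitian ∧ trace P = 0 ∧ trace Q = 0 ∧
      ∀ P' Q', P'.IsHermitian → Q'.IsHermitian → trace P' = 0 → trace Q' = 0 →
        Real.log (Phi A P Q) + ε / 2 * (fsq P + fsq Q)
          ≤ Real.log (Phi A P' Q') + ε / 2 * (fsq P' + fsq Q') := by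
  have hpos : ∀ P Q, P.IsHermitian → Q.IsHermitian → 0 < Phi A P Q := by
    intro P Q hP hQ
    refine lt_of_lt_of_le ?_ (Phi_lower A P Q hP hQ (Real.sqrt (fsq P + fsq Q))
      (Real.sqrt_nonneg _) (by rw [Real.sq_sqrt (add_nonneg (fsq_nonneg _) (fsq_nonneg _))]))
    positivity
  have hR : (0 : ℝ) ≤ 4 / ε := by positivity
  have hz : ((0, 0) : Matrix (Fin n) (Fin n) ℂ × Matrix (Fin m) (Fin m) ℂ) ∈ feas n m (4 / ε) := by
    refine ⟨isHermitian_zero, isHermitian_zero, by simp, by simp, ?_⟩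
    simp [fsq]; positivity
  obtain ⟨⟨P, Q⟩, ⟨hP, hQ, htP, htQ, hle⟩, hmin⟩ := (isCompact_feas n m (4 / ε) hR).exists_isMinOn
    ⟨_, hz⟩ (f := fun x => Real.log (Phi A x.1 x.2) + ε / 2 * (fsq x.1 + fsq x.2)) (by
      refine ContinuousOn.add (ContinuousOn.log (continuous_Phi A).continuousOn ?_)
        (Continuous.continuousOn ?_)
      · intro x hx
        exact (hpos _ _ hx.1 hx.2.1).ne'
      · exact continuous_const.mul ((continuous_fsq.comp continuous_fst).add
          (continuous_fsq.comp continuous_snd)))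
  refine ⟨P, Q, hP, hQ, htP, htQ, ?_⟩
  intro P' Q' hP' hQ' htP' htQ'
  by_cases hc : fsq P' + fsq Q' ≤ (4 / ε) ^ 2
  · exact hmin (a := (P', Q')) ⟨hP', hQ', htP', htQ', hc⟩
  · have h1 := isMinOn_iff.mp hmin (0, 0) hz
    simp only at h1
    have hf : ∀ a : ℕ, fsq (0 : Matrix (Fin a) (Fin a) ℂ) = 0 := by intro a; simp [fsq]
    rw [hf, hf] at h1
    refine h1.trans ?_
    have hnn : 0 ≤ fsq P' + fsq Q' := add_nonneg (fsq_nonneg _) (fsq_nonneg _)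
    set r := Real.sqrt (fsq P' + fsq Q') with hr
    have hr2 : r ^ 2 = fsq P' + fsq Q' := Real.sq_sqrt hnn
    have hr0 : 0 ≤ r := Real.sqrt_nonneg _
    rw [← hr2] at hc ⊢
    push Not at hc
    have hlt : 4 / ε < r := lt_of_pow_lt_pow_left₀ 2 hr0 hc
    rw [div_lt_iff₀ hε] at hlt
    have h2 := Phi_lower A P' Q' hP' hQ' r hr0 hr2.ge
    have h3 := Real.log_le_log (by positivity) h2
    rw [Real.log_mul h0.ne' (Real.exp_pos _).ne', Real.log_exp] at h3
    nlinarith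

lemma half_exp {n : ℕ} (P : Matrix (Fin n) (Fin n) ℂ) (hP : P.IsHermitian) :
    ∃ E : Matrix (Fin n) (Fin n) ℂ, Eᴴ = E ∧ E * E = NormedSpace.exp P ∧ IsUnit E ∧
      ∀ M, P * M = M * P → E * M = M * E := by
  have hh : ((1 / 2 : ℝ) • P).IsHermitian := by
    unfold Matrix.IsHermitian
    rw [conjTranspose_smul, hP.eq]; simp
  refine ⟨NormedSpace.exp ((1 / 2 : ℝ) • P), hh.exp, ?_, Matrix.isUnit_exp _, ?_⟩
  · rw [← Matrix.exp_add_of_commute _ _ (Commute.refl _), ← add_smul]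
    norm_num
  · intro M hM
    have : Commute ((1 / 2 : ℝ) • P) M := Commute.smul_left hM _
    exact this.exp_left.eq

lemma Phi_left {N n m : ℕ} (A : Fin N → Matrix (Fin n) (Fin m) ℂ)
    (P : Matrix (Fin n) (Fin n) ℂ) (Y : Matrix (Fin m) (Fin m) ℂ) :
    ∑ ℓ, reTr (P * A ℓ * Y * (A ℓ)ᴴ) = reTr (P * ∑ ℓ, A ℓ * Y * (A ℓ)ᴴ) := by
  unfold reTr
  rw [Finset.mul_sum, trace_sum, Complex.re_sum]
  simp only [Matrix.mul_assoc]

lemma Phi_right {N n m : ℕ} (A : Fin N → Matrix (Fin n) (Fin m) ℂ)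
    (X : Matrix (Fin n) (Fin n) ℂ) (Q : Matrix (Fin m) (Fin m) ℂ) :
    ∑ ℓ, reTr (X * A ℓ * Q * (A ℓ)ᴴ) = reTr (Q * ∑ ℓ, (A ℓ)ᴴ * X * A ℓ) := by
  have : ∀ ℓ, reTr (X * A ℓ * Q * (A ℓ)ᴴ) = reTr (Q * ((A ℓ)ᴴ * X * A ℓ)) := by
    intro ℓ
    rw [show X * A ℓ * Q * (A ℓ)ᴴ = (X * A ℓ) * (Q * (A ℓ)ᴴ) by simp only [Matrix.mul_assoc],
      reTr_mul_comm]
    simp only [Matrix.mul_assoc]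
  simp only [this]
  unfold reTr
  rw [Finset.mul_sum, trace_sum, Complex.re_sum]

lemma fsq_neg_smul {n : ℕ} (ε : ℝ) (P : Matrix (Fin n) (Fin n) ℂ) :
    fsq (-((ε : ℂ) • P)) = ε ^ 2 * fsq P := by
  unfold fsq
  simp only [Matrix.neg_apply, Matrix.smul_apply, norm_neg, norm_smul, mul_pow, Finset.mul_sum,
    Complex.norm_real, Real.norm_eq_abs, sq_abs]

/-- The lower bound on the residual. -/
def LB {N n m : ℕ} (A : Fin N → Matrix (Fin n) (Fin m) ℂ) (δ : ℝ) : Prop :=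
  ∀ (g : Matrix (Fin n) (Fin n) ℂ) (h : Matrix (Fin m) (Fin m) ℂ), IsUnit g → IsUnit h →
    ∑ ℓ, fsq (g * A ℓ * hᴴ) = 1 →
    δ ≤ Real.sqrt (fsq ((∑ ℓ, g * A ℓ * hᴴ * h * (A ℓ)ᴴ * gᴴ)
        - ((n : ℂ))⁻¹ • (1 : Matrix (Fin n) (Fin n) ℂ))
      + fsq ((∑ ℓ, h * (A ℓ)ᴴ * gᴴ * g * A ℓ * hᴴ)
        - ((m : ℂ))⁻¹ • (1 : Matrix (Fin m) (Fin m) ℂ)))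

lemma crit_step {N n m : ℕ} (hn : 1 ≤ n) (hm : 1 ≤ m) (A : Fin N → Matrix (Fin n) (Fin m) ℂ)
    (h0 : 0 < Phi A 0 0) (δ : ℝ) (hδ : LB A δ) (ε : ℝ) (hε : 0 < ε) :
    ∃ (P : Matrix (Fin n) (Fin n) ℂ) (Q : Matrix (Fin m) (Fin m) ℂ),
      P.IsHermitian ∧ Q.IsHermitian ∧ trace P = 0 ∧ trace Q = 0 ∧
      δ ≤ ε * Real.sqrt (fsq P + fsq Q) ∧
      ∀ s : ℝ, 0 ≤ s → s ≤ 1 →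
        Phi A (s • P) (s • Q) ≤ Phi A 0 0 * Real.exp (-(s * (δ * Real.sqrt (fsq P + fsq Q)))) := by
  obtain ⟨P, Q, hP, hQ, htP, htQ, hmin⟩ := exists_min A h0 ε hε
  have hnn : 0 ≤ fsq P + fsq Q := add_nonneg (fsq_nonneg _) (fsq_nonneg _)
  have hpos : 0 < Phi A P Q := by
    refine lt_of_lt_of_le ?_ (Phi_lower A P Q hP hQ (Real.sqrt (fsq P + fsq Q))
      (Real.sqrt_nonneg _) (by rw [Real.sq_sqrt hnn]))
    positivity
  set r := Real.sqrt (fsq P + fsq Q) with hr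
  have hr2 : r ^ 2 = fsq P + fsq Q := Real.sq_sqrt hnn
  have hr0 : 0 ≤ r := Real.sqrt_nonneg _
  set M1 := ∑ ℓ, A ℓ * NormedSpace.exp Q * (A ℓ)ᴴ with hM1
  set M2 := ∑ ℓ, (A ℓ)ᴴ * NormedSpace.exp P * A ℓ with hM2
  have hM1h : M1.IsHermitian := by
    unfold Matrix.IsHermitian
    rw [hM1, conjTranspose_sum]
    refine Finset.sum_congr rfl fun ℓ _ => ?_
    simp only [conjTranspose_mul, conjTranspose_conjTranspose, hQ.exp.eq, Matrix.mul_assoc]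
  have hM2h : M2.IsHermitian := by
    unfold Matrix.IsHermitian
    rw [hM2, conjTranspose_sum]
    refine Finset.sum_congr rfl fun ℓ _ => ?_
    simp only [conjTranspose_mul, conjTranspose_conjTranspose, hP.exp.eq, Matrix.mul_assoc]
  have hΦ1 : ∀ P', Phi A P' Q = reTr (NormedSpace.exp P' * M1) := fun P' => Phi_left A _ _
  have hΦ2 : ∀ Q', Phi A P Q' = reTr (NormedSpace.exp Q' * M2) := fun Q' => Phi_right A _ _
  have hmin1 : ∀ P' : Matrix (Fin n) (Fin n) ℂ, P'.IsHermitian → trace P' = 0 →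
      Real.log (reTr (NormedSpace.exp P * M1)) + ε / 2 * fsq P
        ≤ Real.log (reTr (NormedSpace.exp P' * M1)) + ε / 2 * fsq P' := by
    intro P' h1 h2
    have := hmin P' Q h1 hQ h2 htQ
    rw [← hΦ1, ← hΦ1]; linarith
  have hmin2 : ∀ Q' : Matrix (Fin m) (Fin m) ℂ, Q'.IsHermitian → trace Q' = 0 →
      Real.log (reTr (NormedSpace.exp Q * M2)) + ε / 2 * fsq Q
        ≤ Real.log (reTr (NormedSpace.exp Q' * M2)) + ε / 2 * fsq Q' := by
    intro P' h1 h2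
    have := hmin P P' hP h1 htP h2
    rw [← hΦ2, ← hΦ2]; linarith
  have c1 := crit_commute M1 P hM1h hP htP ε (by rw [← hΦ1]; exact hpos) hmin1
  have c2 := crit_commute M2 Q hM2h hQ htQ ε (by rw [← hΦ2]; exact hpos) hmin2
  have e1 := crit_eq hn M1 P hM1h hP htP ε (by rw [← hΦ1]; exact hpos) hmin1
  have e2 := crit_eq hm M2 Q hM2h hQ htQ ε (by rw [← hΦ2]; exact hpos) hmin2
  rw [← hΦ1] at e1
  rw [← hΦ2] at e2
  have hδr : δ ≤ ε * r := by
    obtain ⟨E, hEh, hEE, hEu, hEc⟩ := half_exp P hP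
    obtain ⟨F, hFh, hFF, hFu, hFc⟩ := half_exp Q hQ
    set c : ℝ := (Real.sqrt (Phi A P Q))⁻¹ with hc
    have hc0 : c ≠ 0 := by
      have : 0 < c := by positivity
      exact this.ne'
    have hcc : (c : ℂ) * c = (((Phi A P Q)⁻¹ : ℝ) : ℂ) := by
      rw [← Complex.ofReal_mul, hc, ← mul_inv, Real.mul_self_sqrt hpos.le]
    have s1 : ∑ ℓ, ((c : ℂ) • E) * A ℓ * Fᴴ * F * (A ℓ)ᴴ * ((c : ℂ) • E)ᴴ
        = (((Phi A P Q)⁻¹ : ℝ) : ℂ) • (NormedSpace.exp P * M1) := by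
      have : ∀ ℓ, ((c : ℂ) • E) * A ℓ * Fᴴ * F * (A ℓ)ᴴ * ((c : ℂ) • E)ᴴ
        = (((Phi A P Q)⁻¹ : ℝ) : ℂ) • (E * (A ℓ * NormedSpace.exp Q * (A ℓ)ᴴ) * E) := by
        intro ℓ
        rw [hFh, conjTranspose_smul, hEh, ← hFF, ← hcc]
        simp only [Matrix.smul_mul, Matrix.mul_smul, smul_smul, Matrix.mul_assoc]
        simp
      simp only [this]
      rw [← Finset.smul_sum, ← Finset.sum_mul, ← Finset.mul_sum, ← hM1, hEc M1 c1, Matrix.mul_assoc,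
        hEE]
      have : Commute P M1 := c1
      rw [this.exp_left.eq]
    have s2 : ∑ ℓ, F * (A ℓ)ᴴ * ((c : ℂ) • E)ᴴ * ((c : ℂ) • E) * A ℓ * Fᴴ
        = (((Phi A P Q)⁻¹ : ℝ) : ℂ) • (NormedSpace.exp Q * M2) := by
      have : ∀ ℓ, F * (A ℓ)ᴴ * ((c : ℂ) • E)ᴴ * ((c : ℂ) • E) * A ℓ * Fᴴ
        = (((Phi A P Q)⁻¹ : ℝ) : ℂ) • (F * ((A ℓ)ᴴ * NormedSpace.exp P * A ℓ) * F) := by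
        intro ℓ
        rw [hFh, conjTranspose_smul, hEh, ← hEE, ← hcc]
        simp only [Matrix.smul_mul, Matrix.mul_smul, smul_smul, Matrix.mul_assoc]
        simp
      simp only [this]
      rw [← Finset.smul_sum, ← Finset.sum_mul, ← Finset.mul_sum, ← hM2, hFc M2 c2, Matrix.mul_assoc,
        hFF]
      have : Commute Q M2 := c2
      rw [this.exp_left.eq]
    have s0 : ∑ ℓ, fsq (((c : ℂ) • E) * A ℓ * Fᴴ) = 1 := by
      have : ∀ ℓ, fsq (((c : ℂ) • E) * A ℓ * Fᴴ)
          = (trace (((c : ℂ) • E) * A ℓ * Fᴴ * F * (A ℓ)ᴴ * ((c : ℂ) • E)ᴴ)).re := by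
        intro ℓ
        rw [fsq_eq_trace]
        simp only [conjTranspose_mul, conjTranspose_conjTranspose, Matrix.mul_assoc]
      simp only [this]
      rw [← Complex.re_sum, ← trace_sum, s1]
      change reTr _ = 1
      rw [reTr_smul, ← hΦ1]
      exact inv_mul_cancel₀ hpos.ne'
    have hu : IsUnit ((c : ℂ) • E) := by
      have hc0' : (c : ℂ) ≠ 0 := by exact_mod_cast hc0
      obtain ⟨u, rfl⟩ := hEu
      exact ⟨(Units.mk0 (c : ℂ) hc0') • u, by simp [Units.smul_def]⟩
    have := hδ _ F hu hFu s0
    rw [s1, s2, e1, e2, fsq_neg_smul, fsq_neg_smul, ← mul_add,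
      Real.sqrt_mul (sq_nonneg _), Real.sqrt_sq hε.le] at this
    exact this
  refine ⟨P, Q, hP, hQ, htP, htQ, hδr, ?_⟩
  -- slope identities
  have sl1 : reTr (P * NormedSpace.exp P * M1) = -(ε * fsq P) * Phi A P Q := by
    have h1 := congrArg (fun X => reTr (P * X)) e1
    simp only [Matrix.mul_sub, Matrix.mul_smul, Matrix.mul_one, Matrix.mul_neg] at h1
    rw [reTr_sub, reTr_smul, reTr_neg, reTr_smul, ← fsq_herm P hP, ← Matrix.mul_assoc] at h1
    have h2 : reTr ((n : ℂ)⁻¹ • P) = 0 := by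
      unfold reTr; rw [trace_smul, htP]; simp
    rw [h2, sub_zero] at h1
    field_simp at h1
    linarith
  have sl2 : reTr (Q * NormedSpace.exp Q * M2) = -(ε * fsq Q) * Phi A P Q := by
    have h1 := congrArg (fun X => reTr (Q * X)) e2
    simp only [Matrix.mul_sub, Matrix.mul_smul, Matrix.mul_one, Matrix.mul_neg] at h1
    rw [reTr_sub, reTr_smul, reTr_neg, reTr_smul, ← fsq_herm Q hQ, ← Matrix.mul_assoc] at h1
    have h2 : reTr ((m : ℂ)⁻¹ • Q) = 0 := by
      unfold reTr; rw [trace_smul, htQ]; simp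
    rw [h2, sub_zero] at h1
    field_simp at h1
    linarith
  rw [← Phi_left] at sl1
  rw [← Phi_right] at sl2
  clear_value r
  clear hM1 hM2 c1 c2 e1 e2 hmin1 hmin2 hmin hΦ1 hΦ2 hM1h hM2h M1 M2
  obtain ⟨U, p, hU, hU', rfl⟩ := exists_diag P hP
  obtain ⟨V, q, hV, hV', rfl⟩ := exists_diag Q hQ
  have dd : ∀ {k : ℕ} (W : Matrix (Fin k) (Fin k) ℂ) (_ : W * Wᴴ = 1) (d e : Fin k → ℝ),
      (Wᴴ * diagonal (fun i => (d i : ℂ)) * W) * (Wᴴ * diagonal (fun i => (e i : ℂ)) * W)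
      = Wᴴ * diagonal (fun i => ((d i * e i : ℝ) : ℂ)) * W := by
    intro k W hW d e
    calc _ = Wᴴ * diagonal (fun i => (d i : ℂ)) * (W * Wᴴ) * diagonal (fun i => (e i : ℂ)) * W := by
          simp only [Matrix.mul_assoc]
      _ = Wᴴ * (diagonal (fun i => (d i : ℂ)) * diagonal (fun i => (e i : ℂ))) * W := by
          rw [hW, Matrix.mul_one]; simp only [Matrix.mul_assoc]
      _ = _ := by
          rw [diagonal_mul_diagonal]; simp
  rw [exp_conj_diag U hU hU', exp_conj_diag V hV hV', dd U hU', trace_formula] at sl1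
  rw [exp_conj_diag U hU hU', exp_conj_diag V hV hV', dd V hV', trace_formula] at sl2
  have P1 := Phi_formula A U hU hU' V hV hV' p q 1
  have P0 := Phi_formula A U hU hU' V hV hV' p q 0
  simp only [one_smul, zero_smul, one_mul, zero_mul, Real.exp_zero, mul_one] at P1 P0
  intro s hs0 hs1
  rw [Phi_formula A U hU hU' V hV hV' p q s, P0, ← hr]
  refine ray_real (fun x : Fin N × Fin n × Fin m => ‖(U * A x.1 * Vᴴ) x.2.1 x.2.2‖ ^ 2)
    (fun x : Fin N × Fin n × Fin m => p x.2.1 + q x.2.2) (fun i => by positivity)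
    (δ * r) ?_ s hs0 hs1
  rw [← P1]
  have : ∑ x : Fin N × Fin n × Fin m, ‖(U * A x.1 * Vᴴ) x.2.1 x.2.2‖ ^ 2 *
      Real.exp (p x.2.1 + q x.2.2) * (p x.2.1 + q x.2.2)
      = (∑ x : Fin N × Fin n × Fin m, p x.2.1 * Real.exp (p x.2.1) * Real.exp (q x.2.2)
          * ‖(U * A x.1 * Vᴴ) x.2.1 x.2.2‖ ^ 2)
        + (∑ x : Fin N × Fin n × Fin m, Real.exp (p x.2.1) * (q x.2.2 * Real.exp (q x.2.2))
          * ‖(U * A x.1 * Vᴴ) x.2.1 x.2.2‖ ^ 2) := by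
    rw [← Finset.sum_add_distrib]
    refine Finset.sum_congr rfl fun x _ => ?_
    rw [Real.exp_add]; ring
  rw [this, sl1, sl2]
  have h1 : δ * r ≤ ε * r ^ 2 := by nlinarith
  rw [hr2] at h1
  nlinarith

lemma fsq_rsmul {n : ℕ} (ε : ℝ) (P : Matrix (Fin n) (Fin n) ℂ) :
    fsq (ε • P) = ε ^ 2 * fsq P := by
  unfold fsq
  simp only [Matrix.smul_apply, norm_smul, mul_pow, Finset.mul_sum,
    Real.norm_eq_abs, sq_abs]

lemma exists_ray {N n m : ℕ} (hn : 1 ≤ n) (hm : 1 ≤ m) (A : Fin N → Matrix (Fin n) (Fin m) ℂ)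
    (h0 : 0 < Phi A 0 0) (δ : ℝ) (hδ0 : 0 < δ) (hδ : LB A δ) :
    ∃ x ∈ feas n m 1, ∀ t : ℝ, 0 ≤ t →
      Phi A (t • x.1) (t • x.2) ≤ Phi A 0 0 * Real.exp (-(t * δ)) := by
  have step : ∀ k : ℕ, ∃ x ∈ feas n m 1, ∀ t : ℝ, 0 ≤ t → t ≤ δ * (k + 1) →
      Phi A (t • x.1) (t • x.2) ≤ Phi A 0 0 * Real.exp (-(t * δ)) := by
    intro k
    have hk : (0 : ℝ) < k + 1 := by positivity
    obtain ⟨P, Q, hP, hQ, htP, htQ, hr, hs⟩ :=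
      crit_step hn hm A h0 δ hδ (1 / ((k : ℝ) + 1)) (by positivity)
    have hnn : 0 ≤ fsq P + fsq Q := add_nonneg (fsq_nonneg _) (fsq_nonneg _)
    have hr2 := Real.sq_sqrt hnn
    set r := Real.sqrt (fsq P + fsq Q)
    have hr' : δ * (k + 1) ≤ r := by
      rw [one_div, inv_mul_eq_div, le_div_iff₀ hk] at hr
      exact hr
    have hr0 : 0 < r := lt_of_lt_of_le (by positivity) hr'
    refine ⟨(r⁻¹ • P, r⁻¹ • Q), ⟨?_, ?_, ?_, ?_, ?_⟩, ?_⟩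
    · unfold Matrix.IsHermitian
      simp only [conjTranspose_smul, hP.eq, star_trivial]
    · unfold Matrix.IsHermitian
      simp only [conjTranspose_smul, hQ.eq, star_trivial]
    · simp only [trace_smul, htP, smul_zero]
    · simp only [trace_smul, htQ, smul_zero]
    · simp only [fsq_rsmul]
      rw [← mul_add, ← hr2]
      field_simp
      norm_num
    · intro t ht0 ht
      have := hs (t * r⁻¹) (by positivity) (by
        rw [← div_eq_mul_inv, div_le_one hr0]; linarith)
      simp only [smul_smul]
      refine this.trans (le_of_eq ?_)
      congr 3
      field_simp
  choose x hx hxt using step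
  have : ∀ a : ℕ, FirstCountableTopology (Matrix (Fin a) (Fin a) ℂ) := fun a =>
    inferInstanceAs (FirstCountableTopology (Fin a → Fin a → ℂ))
  obtain ⟨a, ha, φ, hφ, hlim⟩ := (isCompact_feas n m 1 zero_le_one).tendsto_subseq hx
  refine ⟨a, ha, fun t ht => ?_⟩
  have hcont : Continuous (fun y : Matrix (Fin n) (Fin n) ℂ × Matrix (Fin m) (Fin m) ℂ =>
      Phi A (t • y.1) (t • y.2)) :=
    (continuous_Phi A).comp (f := fun y : Matrix (Fin n) (Fin n) ℂ × Matrix (Fin m) (Fin m) ℂ =>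
      (t • y.1, t • y.2)) ((continuous_fst.const_smul t).prodMk (continuous_snd.const_smul t))
  refine le_of_tendsto ((hcont.tendsto a).comp hlim) ?_
  obtain ⟨K, hK⟩ := exists_nat_ge (t / δ)
  filter_upwards [eventually_ge_atTop K] with k hk
  refine hxt (φ k) t ht ?_
  have h1 : (K : ℝ) ≤ φ k := by exact_mod_cast hk.trans (hφ.id_le k)
  rw [div_le_iff₀ hδ0] at hK
  nlinarith

lemma su_fix {n : ℕ} (hn : 1 ≤ n) (U : Matrix (Fin n) (Fin n) ℂ) (hU : Uᴴ * U = 1) :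
    ∃ c : ℂ, c ≠ 0 ∧ c • U ∈ Matrix.specialUnitaryGroup (Fin n) ℂ := by
  have hU' : U * Uᴴ = 1 := mul_eq_one_comm.mp hU
  have hd : ‖U.det‖ = 1 := by
    have h := congrArg Matrix.det hU'
    rw [det_mul, det_conjTranspose, det_one] at h
    have h2 : ‖U.det * star U.det‖ = 1 := by rw [h]; simp
    rw [norm_mul, norm_star] at h2
    nlinarith [norm_nonneg U.det]
  have hd0 : U.det ≠ 0 := by intro h; rw [h] at hd; simp at hd
  obtain ⟨c, hc⟩ := IsAlgClosed.exists_pow_nat_eq (U.det)⁻¹ (show 0 < n by omega)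
  have hcn : ‖c‖ = 1 := by
    have h := congrArg norm hc
    rw [norm_pow, norm_inv, hd, inv_one] at h
    exact (pow_eq_one_iff_of_nonneg (norm_nonneg _) (by omega)).mp h
  have hcc : c * star c = 1 := by
    have := Complex.mul_conj' c
    rw [hcn] at this
    simpa using this
  refine ⟨c, ?_, ?_⟩
  · intro h; rw [h] at hcn; simp at hcn
  · rw [Matrix.mem_specialUnitaryGroup_iff, Matrix.mem_unitaryGroup_iff]
    constructor
    · rw [star_eq_conjTranspose, conjTranspose_smul, Matrix.smul_mul, Matrix.mul_smul, smul_smul,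
        hU', hcc, one_smul]
    · rw [det_smul, Fintype.card_fin, hc, inv_mul_cancel₀ hd0]

lemma exp_compare (b C δ s : ℝ) (hb : 0 < b)
    (h : ∀ t : ℝ, 0 ≤ t → b * Real.exp (t * s) ≤ C * Real.exp (-(t * δ))) : s ≤ -δ := by
  by_contra hlt
  push Not at hlt
  have hlt' : 0 < s + δ := by linarith
  have key : ∀ t : ℝ, 0 ≤ t → b * (t * (s + δ)) ≤ C := by
    intro t ht
    have h1 := h t ht
    have h2 : b * Real.exp (t * (s + δ)) ≤ C := by
      have := mul_le_mul_of_nonneg_right h1 (Real.exp_pos (t * δ)).le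
      rw [mul_assoc, mul_assoc, ← Real.exp_add, ← Real.exp_add] at this
      rw [show -(t * δ) + t * δ = 0 by ring, Real.exp_zero, mul_one] at this
      rw [mul_add]; exact this
    refine le_trans ?_ h2
    have := Real.add_one_le_exp (t * (s + δ))
    exact mul_le_mul_of_nonneg_left (by linarith) hb.le
  have hC : 0 ≤ C := by have := key 0 le_rfl; simpa using this
  have := key ((C + 1) / (b * (s + δ))) (by positivity)
  have e : b * ((C + 1) / (b * (s + δ)) * (s + δ)) = C + 1 := by field_simp
  linarith

lemma single_term {ι : Type*} [Fintype ι] (f : ι → ℝ) (hf : ∀ i, 0 ≤ f i) (i : ι) :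
    f i ≤ ∑ x, f x :=
  Finset.single_le_sum (fun x _ => hf x) (Finset.mem_univ i)

lemma strong_duality {N n m : ℕ} (hn : 1 ≤ n) (hm : 1 ≤ m) (A : Fin N → Matrix (Fin n) (Fin m) ℂ)
    (h0 : 0 < Phi A 0 0) (δ : ℝ) (hδ0 : 0 < δ) (hδ : LB A δ) :
    ∃ σ ∈ Matrix.specialUnitaryGroup (Fin n) ℂ, ∃ τ ∈ Matrix.specialUnitaryGroup (Fin m) ℂ,
      ∃ (p : Fin n → ℝ) (q : Fin m → ℝ), (∑ i, p i) = 0 ∧ (∑ j, q j) = 0 ∧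
        (∑ i, (p i) ^ 2) + (∑ j, (q j) ^ 2) ≤ 1 ∧
        ∀ ℓ i j, (σ * A ℓ * τᴴ) i j ≠ 0 → p i + q j ≤ -δ := by
  obtain ⟨x, hx, hray⟩ := exists_ray hn hm A h0 δ hδ0 hδ
  have hP : x.1.IsHermitian := hx.1
  have hQ : x.2.IsHermitian := hx.2.1
  have htP : trace x.1 = 0 := hx.2.2.1
  have htQ : trace x.2 = 0 := hx.2.2.2.1
  have hle : fsq x.1 + fsq x.2 ≤ 1 ^ 2 := hx.2.2.2.2
  clear hx
  obtain ⟨U, p, hU, hU', hPe⟩ := exists_diag x.1 hP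
  obtain ⟨V, q, hV, hV', hQe⟩ := exists_diag x.2 hQ
  rw [hPe] at htP hle
  rw [hQe] at htQ hle
  rw [hPe, hQe] at hray
  obtain ⟨c, hc, hσ⟩ := su_fix hn U hU
  obtain ⟨d, hd, hτ⟩ := su_fix hm V hV
  rw [trace_conj_diag U hU'] at htP
  rw [trace_conj_diag V hV'] at htQ
  rw [fsq_conj_diag U hU hU', fsq_conj_diag V hV hV'] at hle
  refine ⟨c • U, hσ, d • V, hτ, p, q, Complex.ofReal_eq_zero.mp htP, Complex.ofReal_eq_zero.mp htQ, hle.trans (by norm_num), ?_⟩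
  intro ℓ i j hne
  have hne' : (U * A ℓ * Vᴴ) i j ≠ 0 := by
    intro h
    apply hne
    rw [conjTranspose_smul, Matrix.smul_mul, Matrix.smul_mul, Matrix.mul_smul,
      Matrix.smul_apply, Matrix.smul_apply, h]
    simp
  refine exp_compare (‖(U * A ℓ * Vᴴ) i j‖ ^ 2) (Phi A 0 0) δ _ (by positivity) ?_
  intro t ht
  have h1 := hray t ht
  rw [Phi_formula A U hU hU' V hV hV' p q t] at h1
  refine le_trans ?_ h1
  exact single_term (fun x : Fin N × Fin n × Fin m =>
      ‖(U * A x.1 * Vᴴ) x.2.1 x.2.2‖ ^ 2 * Real.exp (t * (p x.2.1 + q x.2.2)))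
    (fun x => by positivity) (ℓ, i, j)

/-- Duality theorem for the scalability limit of operator scaling (Theorem 4.11):
for a tuple `A = (A₁,…,A_N)` of `n×m` complex matrices with trivial left and right
common kernels, the infimum, over `g ∈ GL_n(ℂ)`, `h ∈ GL_m(ℂ)` with
`Σ_ℓ ‖g A_ℓ hᴴ‖² = 1`, of
`(‖Σ_ℓ g A_ℓ hᴴ h A_ℓᴴ gᴴ − (1/n)·Iₙ‖² + ‖Σ_ℓ h A_ℓᴴ gᴴ g A_ℓ hᴴ − (1/m)·Iₘ‖²)^{1/2}`
equals the supremum, over special unitary `σ, τ` and vectors `p, q` with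
`Σᵢ pᵢ = Σⱼ qⱼ = 0` and `‖p‖² + ‖q‖² ≤ 1`, of
`−max{ pᵢ + qⱼ : (σ A_ℓ τᴴ)_{ij} ≠ 0 for some ℓ }`. -/
theorem operator_scaling_duality {N n m : ℕ} (hN : 1 ≤ N) (hn : 1 ≤ n) (hm : 1 ≤ m)
    (A : Fin N → Matrix (Fin n) (Fin m) ℂ)
    (hker : (⨅ ℓ, LinearMap.ker (Matrix.mulVecLin (A ℓ))) = ⊥)
    (hker' : (⨅ ℓ, LinearMap.ker (Matrix.mulVecLin ((A ℓ)ᴴ))) = ⊥) :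
    sInf { r : ℝ | ∃ (g : GL (Fin n) ℂ) (h : GL (Fin m) ℂ),
        (∑ ℓ, (frobNorm ((g : Matrix (Fin n) (Fin n) ℂ) * A ℓ
            * ((h : Matrix (Fin m) (Fin m) ℂ))ᴴ)) ^ 2) = 1 ∧
        r = Real.sqrt
          ((frobNorm ((∑ ℓ, (g : Matrix (Fin n) (Fin n) ℂ) * A ℓ
                * ((h : Matrix (Fin m) (Fin m) ℂ))ᴴ * (h : Matrix (Fin m) (Fin m) ℂ)
                * (A ℓ)ᴴ * ((g : Matrix (Fin n) (Fin n) ℂ))ᴴ)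
              - ((n : ℂ))⁻¹ • (1 : Matrix (Fin n) (Fin n) ℂ))) ^ 2
           + (frobNorm ((∑ ℓ, (h : Matrix (Fin m) (Fin m) ℂ) * (A ℓ)ᴴ
                * ((g : Matrix (Fin n) (Fin n) ℂ))ᴴ * (g : Matrix (Fin n) (Fin n) ℂ)
                * A ℓ * ((h : Matrix (Fin m) (Fin m) ℂ))ᴴ)
              - ((m : ℂ))⁻¹ • (1 : Matrix (Fin m) (Fin m) ℂ))) ^ 2) }
    = sSup { r : ℝ | ∃ σ ∈ Matrix.specialUnitaryGroup (Fin n) ℂ,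
        ∃ τ ∈ Matrix.specialUnitaryGroup (Fin m) ℂ,
        ∃ (p : Fin n → ℝ) (q : Fin m → ℝ),
          (∑ i, p i) = 0 ∧ (∑ j, q j) = 0 ∧
          (∑ i, (p i) ^ 2) + (∑ j, (q j) ^ 2) ≤ 1 ∧
          r = -sSup {c : ℝ | ∃ i j, (∃ ℓ, (σ * A ℓ * τᴴ) i j ≠ 0) ∧ c = p i + q j} } := by
  classical
  have hA : ∃ ℓ, A ℓ ≠ 0 := by
    by_contra hcon
    push Not at hcon
    have h1 : (⨅ ℓ, LinearMap.ker (Matrix.mulVecLin (A ℓ))) = ⊤ := by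
      rw [iInf_eq_top]
      intro ℓ
      rw [hcon ℓ]
      ext v
      simp
    rw [h1] at hker
    have : Nonempty (Fin m) := ⟨⟨0, by omega⟩⟩
    exact top_ne_bot hker
  obtain ⟨ℓ₀, hℓ₀⟩ := hA
  have h0 : 0 < Phi A 0 0 := by
    rw [Phi_zero]
    refine lt_of_lt_of_le ?_ (single_term (fun ℓ => fsq (A ℓ)) (fun ℓ => fsq_nonneg _) ℓ₀)
    exact lt_of_le_of_ne (fsq_nonneg _) (fun h => hℓ₀ (eq_zero_of_fsq _ h.symm))
  have hun : ∀ {k : ℕ} (σ : Matrix (Fin k) (Fin k) ℂ), σ ∈ Matrix.specialUnitaryGroup (Fin k) ℂ →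
      σᴴ * σ = 1 := by
    intro k σ hσ
    have := (Matrix.mem_specialUnitaryGroup_iff.mp hσ).1
    exact Matrix.mem_unitaryGroup_iff'.mp this
  have hbdd : ∀ (σ : Matrix (Fin n) (Fin n) ℂ) (τ : Matrix (Fin m) (Fin m) ℂ)
      (p : Fin n → ℝ) (q : Fin m → ℝ),
      BddAbove {c : ℝ | ∃ i j, (∃ ℓ, (σ * A ℓ * τᴴ) i j ≠ 0) ∧ c = p i + q j} := by
    intro σ τ p q
    refine Set.Finite.bddAbove (Set.Finite.subset
      (Set.finite_range (fun x : Fin n × Fin m => p x.1 + q x.2)) ?_)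
    rintro c ⟨i, j, -, rfl⟩
    exact ⟨(i, j), rfl⟩
  have hne : ∀ (σ : Matrix (Fin n) (Fin n) ℂ) (τ : Matrix (Fin m) (Fin m) ℂ)
      (p : Fin n → ℝ) (q : Fin m → ℝ), σᴴ * σ = 1 → τᴴ * τ = 1 →
      {c : ℝ | ∃ i j, (∃ ℓ, (σ * A ℓ * τᴴ) i j ≠ 0) ∧ c = p i + q j}.Nonempty := by
    intro σ τ p q hσ hτ
    by_contra hcon
    apply hℓ₀
    have hz : σ * A ℓ₀ * τᴴ = 0 := by
      ext i j
      by_contra hij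
      exact hcon ⟨_, i, j, ⟨ℓ₀, hij⟩, rfl⟩
    calc A ℓ₀ = (σᴴ * σ) * A ℓ₀ * (τᴴ * τ) := by rw [hσ, hτ, Matrix.one_mul, Matrix.mul_one]
      _ = σᴴ * (σ * A ℓ₀ * τᴴ) * τ := by simp only [Matrix.mul_assoc]
      _ = 0 := by rw [hz]; simp
  simp only [frobNorm_sq]
  set S := { r : ℝ | ∃ (g : GL (Fin n) ℂ) (h : GL (Fin m) ℂ),
        (∑ ℓ, fsq ((g : Matrix (Fin n) (Fin n) ℂ) * A ℓ
            * ((h : Matrix (Fin m) (Fin m) ℂ))ᴴ)) = 1 ∧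
        r = Real.sqrt
          (fsq ((∑ ℓ, (g : Matrix (Fin n) (Fin n) ℂ) * A ℓ
                * ((h : Matrix (Fin m) (Fin m) ℂ))ᴴ * (h : Matrix (Fin m) (Fin m) ℂ)
                * (A ℓ)ᴴ * ((g : Matrix (Fin n) (Fin n) ℂ))ᴴ)
              - ((n : ℂ))⁻¹ • (1 : Matrix (Fin n) (Fin n) ℂ))
           + fsq ((∑ ℓ, (h : Matrix (Fin m) (Fin m) ℂ) * (A ℓ)ᴴ
                * ((g : Matrix (Fin n) (Fin n) ℂ))ᴴ * (g : Matrix (Fin n) (Fin n) ℂ)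
                * A ℓ * ((h : Matrix (Fin m) (Fin m) ℂ))ᴴ)
              - ((m : ℂ))⁻¹ • (1 : Matrix (Fin m) (Fin m) ℂ))) } with hS
  set T := { r : ℝ | ∃ σ ∈ Matrix.specialUnitaryGroup (Fin n) ℂ,
        ∃ τ ∈ Matrix.specialUnitaryGroup (Fin m) ℂ,
        ∃ (p : Fin n → ℝ) (q : Fin m → ℝ),
          (∑ i, p i) = 0 ∧ (∑ j, q j) = 0 ∧
          (∑ i, (p i) ^ 2) + (∑ j, (q j) ^ 2) ≤ 1 ∧
          r = -sSup {c : ℝ | ∃ i j, (∃ ℓ, (σ * A ℓ * τᴴ) i j ≠ 0) ∧ c = p i + q j} } with hT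
  have hSne : S.Nonempty := by
    have hs : 0 < Real.sqrt (Phi A 0 0) := Real.sqrt_pos.mpr h0
    have hc0 : (((Real.sqrt (Phi A 0 0))⁻¹ : ℝ) : ℂ) ≠ 0 := by
      exact_mod_cast (inv_pos.mpr hs).ne'
    refine ⟨_, Units.mk0 _ hc0 • (1 : GL (Fin n) ℂ), 1, ?_, rfl⟩
    have h1 : ∀ ℓ, fsq (((Units.mk0 _ hc0 • (1 : GL (Fin n) ℂ) : GL (Fin n) ℂ) :
        Matrix (Fin n) (Fin n) ℂ) * A ℓ * ((1 : GL (Fin m) ℂ) : Matrix (Fin m) (Fin m) ℂ)ᴴ)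
        = (Phi A 0 0)⁻¹ * fsq (A ℓ) := by
      intro ℓ
      have h2 : ((Units.mk0 _ hc0 • (1 : GL (Fin n) ℂ) : GL (Fin n) ℂ) :
        Matrix (Fin n) (Fin n) ℂ) * A ℓ * ((1 : GL (Fin m) ℂ) : Matrix (Fin m) (Fin m) ℂ)ᴴ
        = (((Real.sqrt (Phi A 0 0))⁻¹ : ℝ) : ℂ) • A ℓ := by
        simp [Units.smul_def]
      rw [h2]
      unfold fsq
      simp only [Matrix.smul_apply, norm_smul, mul_pow, Finset.mul_sum,
        Complex.norm_real, Real.norm_eq_abs, sq_abs]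
      rw [inv_pow, Real.sq_sqrt h0.le]
    simp only [h1]
    rw [← Finset.mul_sum, ← Phi_zero]
    exact inv_mul_cancel₀ h0.ne'
  have hSb : BddBelow S := by
    refine ⟨0, ?_⟩
    rintro r ⟨g, h, -, rfl⟩
    exact Real.sqrt_nonneg _
  have hweak : ∀ t ∈ T, ∀ s ∈ S, t ≤ s := by
    rintro t ⟨σ, hσ, τ, hτ, p, q, hp, hq, hpq, rfl⟩ s ⟨g, h, hgh, rfl⟩
    refine weak_duality A _ _ hgh σ (hun σ hσ) τ (hun τ hτ) p q hp hq hpq _ ?_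
    intro ℓ i j hij
    exact le_csSup (hbdd σ τ p q) ⟨i, j, ⟨ℓ, hij⟩, rfl⟩
  have hT0 : (0 : ℝ) ∈ T := by
    refine ⟨1, one_mem _, 1, one_mem _, fun _ => 0, fun _ => 0, by simp, by simp, by simp, ?_⟩
    have hne0 := hne 1 1 (fun _ => 0) (fun _ => 0) (by simp) (by simp)
    have hset : {c : ℝ | ∃ (i : Fin n) (j : Fin m), (∃ ℓ, ((1 : Matrix (Fin n) (Fin n) ℂ) * A ℓ
        * (1 : Matrix (Fin m) (Fin m) ℂ)ᴴ) i j ≠ 0) ∧ c = (0 : ℝ) + 0} = {0} := by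
      refine (Set.Nonempty.subset_singleton_iff hne0).mp ?_
      rintro c ⟨i, j, -, rfl⟩
      simp
    rw [hset]
    simp
  have hTb : BddAbove T := by
    obtain ⟨s, hs⟩ := hSne
    exact ⟨s, fun t ht => hweak t ht s hs⟩
  apply le_antisymm
  · by_cases hδ : 0 < sInf S
    · have hLB : LB A (sInf S) := by
        intro g h hg hh hgh
        obtain ⟨g, rfl⟩ := hg
        obtain ⟨h, rfl⟩ := hh
        exact csInf_le hSb ⟨g, h, hgh, rfl⟩
      obtain ⟨σ, hσ, τ, hτ, p, q, hp, hq, hpq, hle⟩ := strong_duality hn hm A h0 _ hδ hLB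
      refine le_trans ?_ (le_csSup hTb ⟨σ, hσ, τ, hτ, p, q, hp, hq, hpq, rfl⟩)
      have : sSup {c : ℝ | ∃ i j, (∃ ℓ, (σ * A ℓ * τᴴ) i j ≠ 0) ∧ c = p i + q j} ≤ -sInf S := by
        refine csSup_le (hne σ τ p q (hun σ hσ) (hun τ hτ)) ?_
        rintro c ⟨i, j, ⟨ℓ, hij⟩, rfl⟩
        exact hle ℓ i j hij
      linarith
    · exact (not_lt.mp hδ).trans (le_csSup hTb hT0)
  · exact csSup_le ⟨0, hT0⟩ fun t ht => le_csInf hSne fun s hs => hweak t ht s hs
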